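/- Set m = k_i − k_{i−1} and let c := Σ_{f=0}^{m} (−1)^{m−f} ξ^f ⊗ φ(x(k)_{i,m−f}) ∈ H_{k⁺ⁱ} ⊗_{H_{₊ᵢk}} H_{k⁺ⁱ}. Then (ξ ⊗ 1)·c = (1 ⊗ ξ)·c; equivalently, Σ_{f=0}^{m} (−1)^{m−f} ξ^{f+1} ⊗ φ(x(k)_{i,m−f}) = Σ_{g=0}^{m} (−1)^{m−g} ξ^g ⊗ ξ·φ(x(k)_{i,m−g}). -/

import Mathlib

/-!
Cohomology rings of `n`-step partial flag varieties, following
Khovanov–Lauda, "A diagrammatic approach to categorification of quantum groups III",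
Section 5 (Iterated flag varieties).
-/

open MvPolynomial Finset TensorProduct

noncomputable section

variable (𝕜 : Type) [Field 𝕜]

/-- The generator `x(k)_{j,α}` of `H_k` (with the conventions `x(k)_{j,0} = 1` and
`x(k)_{j,α} = 0` for `j` or `α` out of range), at the level of the ambient polynomial ring. -/
def xp (n : ℕ) (k : ℕ → ℕ) (j α : ℕ) : MvPolynomial (ℕ × ℕ) 𝕜 :=
  if α = 0 then 1 else if 1 ≤ j ∧ j ≤ n ∧ α ≤ k j - k (j - 1) then X (j, α) else 0

/-- The degree `2d` part of the defining relation of `H_k`: the sum over all tuples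
`(α_1, …, α_n)` with `α_1 + ⋯ + α_n = d` of the products `x(k)_{1,α_1} ⋯ x(k)_{n,α_n}`
(out-of-range tuples contribute `0`). -/
def relPoly (n : ℕ) (k : ℕ → ℕ) (d : ℕ) : MvPolynomial (ℕ × ℕ) 𝕜 :=
  ∑ t ∈ Finset.Nat.antidiagonalTuple n d, ∏ j : Fin n, xp 𝕜 n k ((j : ℕ) + 1) (t j)

/-- The pairs `(j, α)` indexing the actual generators of `H_k`. -/
def InRangeK (n : ℕ) (k : ℕ → ℕ) (j α : ℕ) : Prop :=
  1 ≤ j ∧ j ≤ n ∧ 1 ≤ α ∧ α ≤ k j - k (j - 1)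

/-- The defining ideal of `H_k`: the relations `relPoly` for every `d ≥ 1`, together with
all the irrelevant variables of the ambient polynomial ring. -/
def relIdealK (n : ℕ) (k : ℕ → ℕ) : Ideal (MvPolynomial (ℕ × ℕ) 𝕜) :=
  Ideal.span ({p | ∃ d, 1 ≤ d ∧ p = relPoly 𝕜 n k d} ∪
    {p | ∃ j α : ℕ, ¬ InRangeK n k j α ∧ p = X (j, α)})

/-- The cohomology ring `H_k` of the `n`-step flag variety `Fl(k)`. -/
abbrev HK (n : ℕ) (k : ℕ → ℕ) : Type := MvPolynomial (ℕ × ℕ) 𝕜 ⧸ relIdealK 𝕜 n k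

/-- The generator `x(k)_{j,α} ∈ H_k` (with conventions). -/
def xK (n : ℕ) (k : ℕ → ℕ) (j α : ℕ) : HK 𝕜 n k :=
  Ideal.Quotient.mk (relIdealK 𝕜 n k) (xp 𝕜 n k j α)

open Classical in
/-- The dual generator `x̄(k)_{j,α}`: the sum over all tuples `(α_ℓ)_{ℓ ≠ j}` with
`∑_{ℓ ≠ j} α_ℓ = α` of the products `∏_{ℓ ≠ j} x(k)_{ℓ,α_ℓ}`, at the polynomial level. -/
def xbarp (n : ℕ) (k : ℕ → ℕ) (j α : ℕ) : MvPolynomial (ℕ × ℕ) 𝕜 :=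
  ∑ t ∈ Finset.Nat.antidiagonalTuple n α,
    if ∀ ℓ : Fin n, (ℓ : ℕ) + 1 = j → t ℓ = 0 then
      ∏ ℓ : Fin n, xp 𝕜 n k ((ℓ : ℕ) + 1) (t ℓ)
    else 0

/-- The dual generator `x̄(k)_{j,α} ∈ H_k`. -/
def xbarK (n : ℕ) (k : ℕ → ℕ) (j α : ℕ) : HK 𝕜 n k :=
  Ideal.Quotient.mk (relIdealK 𝕜 n k) (xbarp 𝕜 n k j α)

/-- The dual generator with an integer index, with `x̄(k)_{j,α} = 0` for `α < 0`. -/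
def xbarKZ (n : ℕ) (k : ℕ → ℕ) (j : ℕ) (α : ℤ) : HK 𝕜 n k :=
  if 0 ≤ α then xbarK 𝕜 n k j α.toNat else 0

/-- The sequence `₊ᵢk`, obtained from `k` by replacing `k i` with `k i + 1`. -/
def kup (k : ℕ → ℕ) (i : ℕ) : ℕ → ℕ := fun j => if j = i then k i + 1 else k j

/-- The pairs `(j, α)` indexing the actual generators of `H_{k⁺ⁱ}`:
`ξ` is the variable `(0, 1)`, the `x_{j,α}` (`j ≠ i+1`) are the variables `(j, α)`, and
the `x'_{i+1,α}` are the variables `(i+1, α)`. -/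
def InRangeKi (n : ℕ) (k : ℕ → ℕ) (i j α : ℕ) : Prop :=
  (j = 0 ∧ α = 1) ∨
  (1 ≤ j ∧ j ≤ n ∧ j ≠ i + 1 ∧ 1 ≤ α ∧ α ≤ k j - k (j - 1)) ∨
  (j = i + 1 ∧ 1 ≤ α ∧ α ≤ k (i + 1) - k i - 1)

/-- The generator `x_{j,α}` (for `j ≠ i + 1`) of `H_{k⁺ⁱ}`, with conventions,
at the polynomial level. -/
def yp (n : ℕ) (k : ℕ → ℕ) (i j α : ℕ) : MvPolynomial (ℕ × ℕ) 𝕜 :=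
  if α = 0 then 1
  else if 1 ≤ j ∧ j ≤ n ∧ j ≠ i + 1 ∧ α ≤ k j - k (j - 1) then X (j, α) else 0

/-- The generator `x'_{i+1,α}` of `H_{k⁺ⁱ}`, with conventions, at the polynomial level. -/
def y'p (n : ℕ) (k : ℕ → ℕ) (i α : ℕ) : MvPolynomial (ℕ × ℕ) 𝕜 :=
  if α = 0 then 1 else if α ≤ k (i + 1) - k i - 1 then X (i + 1, α) else 0

/-- The coefficient of `t^α` in the `j`-th factor of the generating series
`(1 + ξt) ⬝ (∑_α x'_{i+1,α} t^α) ⬝ ∏_{j ≠ i+1} (∑_α x_{j,α} t^α)` defining `H_{k⁺ⁱ}`;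
the factor `j = 0` is `1 + ξ t`. -/
def fp (n : ℕ) (k : ℕ → ℕ) (i j α : ℕ) : MvPolynomial (ℕ × ℕ) 𝕜 :=
  if j = 0 then (if α = 0 then 1 else if α = 1 then X (0, 1) else 0)
  else if j = i + 1 then y'p 𝕜 n k i α
  else yp 𝕜 n k i j α

/-- The coefficient of `t^d` in
`(1 + ξt) ⬝ (∑_α x'_{i+1,α} t^α) ⬝ ∏_{j ≠ i+1} (∑_α x_{j,α} t^α)`. -/
def relPolyKi (n : ℕ) (k : ℕ → ℕ) (i d : ℕ) : MvPolynomial (ℕ × ℕ) 𝕜 :=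
  ∑ t ∈ Finset.Nat.antidiagonalTuple (n + 1) d, ∏ j : Fin (n + 1), fp 𝕜 n k i (j : ℕ) (t j)

/-- The defining ideal of `H_{k⁺ⁱ}`. -/
def relIdealKi (n : ℕ) (k : ℕ → ℕ) (i : ℕ) : Ideal (MvPolynomial (ℕ × ℕ) 𝕜) :=
  Ideal.span ({p | ∃ d, 1 ≤ d ∧ p = relPolyKi 𝕜 n k i d} ∪
    {p | ∃ j α : ℕ, ¬ InRangeKi n k i j α ∧ p = X (j, α)})

/-- The cohomology ring `H_{k⁺ⁱ}` of the `(n+1)`-step flag variety `Fl(k⁺ⁱ)`. -/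
abbrev HKi (n : ℕ) (k : ℕ → ℕ) (i : ℕ) : Type := MvPolynomial (ℕ × ℕ) 𝕜 ⧸ relIdealKi 𝕜 n k i

/-- The degree `2` generator `ξ ∈ H_{k⁺ⁱ}`. -/
def xiK (n : ℕ) (k : ℕ → ℕ) (i : ℕ) : HKi 𝕜 n k i :=
  Ideal.Quotient.mk (relIdealKi 𝕜 n k i) (X (0, 1))

/-- The generator `x_{j,α} ∈ H_{k⁺ⁱ}` (for `j ≠ i + 1`), with conventions. -/
def yK (n : ℕ) (k : ℕ → ℕ) (i j α : ℕ) : HKi 𝕜 n k i :=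
  Ideal.Quotient.mk (relIdealKi 𝕜 n k i) (yp 𝕜 n k i j α)

/-- The generator `x'_{i+1,α} ∈ H_{k⁺ⁱ}`, with conventions. -/
def y'K (n : ℕ) (k : ℕ → ℕ) (i α : ℕ) : HKi 𝕜 n k i :=
  Ideal.Quotient.mk (relIdealKi 𝕜 n k i) (y'p 𝕜 n k i α)

/-- `φ : H_k → H_{k⁺ⁱ}` is the algebra homomorphism determined by
`φ(x(k)_{j,α}) = x_{j,α}` for `j ≠ i+1` and
`φ(x(k)_{i+1,α}) = ξ·x'_{i+1,α-1} + x'_{i+1,α}`. -/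
def IsPhi (n : ℕ) (k : ℕ → ℕ) (i : ℕ) (φ : HK 𝕜 n k →ₐ[𝕜] HKi 𝕜 n k i) : Prop :=
  (∀ j α : ℕ, j ≠ i + 1 → φ (xK 𝕜 n k j α) = yK 𝕜 n k i j α) ∧
  (∀ α : ℕ, 1 ≤ α → φ (xK 𝕜 n k (i + 1) α) =
    xiK 𝕜 n k i * y'K 𝕜 n k i (α - 1) + y'K 𝕜 n k i α)

/-- `ψ : H_{₊ᵢk} → H_{k⁺ⁱ}` is the algebra homomorphism determined by
`ψ(x(₊ᵢk)_{j,α}) = x_{j,α}` for `j ≠ i, i+1`, `ψ(x(₊ᵢk)_{i+1,α}) = x'_{i+1,α}`, and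
`ψ(x(₊ᵢk)_{i,α}) = ξ·x_{i,α-1} + x_{i,α}`. -/
def IsPsi (n : ℕ) (k : ℕ → ℕ) (i : ℕ) (ψ : HK 𝕜 n (kup k i) →ₐ[𝕜] HKi 𝕜 n k i) : Prop :=
  (∀ j α : ℕ, j ≠ i → j ≠ i + 1 → ψ (xK 𝕜 n (kup k i) j α) = yK 𝕜 n k i j α) ∧
  (∀ α : ℕ, ψ (xK 𝕜 n (kup k i) (i + 1) α) = y'K 𝕜 n k i α) ∧
  (∀ α : ℕ, 1 ≤ α → ψ (xK 𝕜 n (kup k i) i α) =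
    xiK 𝕜 n k i * yK 𝕜 n k i i (α - 1) + yK 𝕜 n k i i α)

/-- The degree `2d` homogeneous component of a quotient of the polynomial ring, where the
variable `(j, α)` has degree `2α`. -/
def qgrade (I : Ideal (MvPolynomial (ℕ × ℕ) 𝕜)) (d : ℕ) :
    Submodule 𝕜 (MvPolynomial (ℕ × ℕ) 𝕜 ⧸ I) :=
  Submodule.map (Ideal.Quotient.mkₐ 𝕜 I).toLinearMap
    (weightedHomogeneousSubmodule 𝕜 (fun v : ℕ × ℕ => 2 * v.2) d)

end

section Statements2

variable (𝕜 : Type) [Field 𝕜]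

/-!
The element `c` is `P(ξ ⊗ 1)`, where `P(T) = ∑ (-1)^α x_{i,α} T^(m-α)` has its coefficients in the
right tensor factor. Since `(1 + ξt) ∑ x_{i,α} t^α = ∑ ψ(x(₊ᵢk)_{i,α}) t^α`, the product
`(T - ξ) P(T)` comes from a polynomial `Q` over `H_{₊ᵢk}`, and `ξ` is a root of `Q`. Over the tensor
product, `Q(T) = (T - 1 ⊗ ξ) P(T)`; evaluating at `T = ξ ⊗ 1` gives `(ξ ⊗ 1 - 1 ⊗ ξ) c = 0`.
-/

open scoped Polynomial

section ChernRootPolynomial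

variable {R S : Type*} [CommRing R] [CommRing S]

/-- The polynomial `∑_α (-1)^α y_α T^(m-α)`: if `y_0 = 1` and `y_1, …, y_m` are the Chern classes of
a vector bundle of rank `m`, this is the monic polynomial whose roots are the Chern roots. The sum
runs over the exponent `f = m - α`. -/
noncomputable def chernRootPoly (y : ℕ → R) (m : ℕ) : R[X] :=
  ∑ f ∈ Finset.range (m + 1), Polynomial.C ((-1) ^ (m - f) * y (m - f)) * Polynomial.X ^ f

theorem chernRootPoly_zero (y : ℕ → R) : chernRootPoly y 0 = Polynomial.C (y 0) := by
  simp [chernRootPoly]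

theorem chernRootPoly_succ (y : ℕ → R) (m : ℕ) :
    chernRootPoly y (m + 1) =
      Polynomial.X * chernRootPoly y m + Polynomial.C ((-1) ^ (m + 1) * y (m + 1)) := by
  rw [chernRootPoly, Finset.sum_range_succ', chernRootPoly, Finset.mul_sum]
  congr 1
  · refine Finset.sum_congr rfl fun f _ ↦ ?_
    rw [Nat.add_sub_add_right]
    ring
  · simp

theorem map_chernRootPoly (g : R →+* S) (y : ℕ → R) (m : ℕ) :
    (chernRootPoly y m).map g = chernRootPoly (fun α ↦ g (y α)) m := by
  simp [chernRootPoly, Polynomial.map_sum]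

theorem eval₂_chernRootPoly (g : R →+* S) (s : S) (y : ℕ → R) (m : ℕ) :
    (chernRootPoly y m).eval₂ g s =
      ∑ f ∈ Finset.range (m + 1), (-1) ^ (m - f) * (s ^ f * g (y (m - f))) := by
  rw [chernRootPoly, Polynomial.eval₂_finsetSum]
  refine Finset.sum_congr rfl fun f _ ↦ ?_
  rw [Polynomial.eval₂_mul, Polynomial.eval₂_C, Polynomial.eval₂_X_pow, map_mul, map_pow, map_neg,
    map_one]
  ring

theorem X_sub_C_mul_chernRootPoly {ξ : R} {y e : ℕ → R} (h_zero : e 0 = y 0)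
    (h_succ : ∀ α, e (α + 1) = ξ * y α + y (α + 1)) (m : ℕ) :
    (Polynomial.X - Polynomial.C ξ) * chernRootPoly y m =
      chernRootPoly e (m + 1) - Polynomial.C ((-1) ^ (m + 1) * y (m + 1)) := by
  induction m with
  | zero =>
    simp only [chernRootPoly_succ, chernRootPoly_zero, h_zero, h_succ, map_mul, map_add, map_pow,
      map_neg, map_one]
    ring
  | succ m ih =>
    rw [chernRootPoly_succ y, mul_add, mul_left_comm, ih, chernRootPoly_succ e (m + 1), h_succ]
    simp only [map_mul, map_add, map_pow, map_neg, map_one]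
    ring

end ChernRootPolynomial

theorem algHom_mul_eval₂_eq_algHom_mul_eval₂ {A B S : Type*} [CommRing A] [CommRing B] [CommRing S]
    [Algebra A B] [Algebra A S] (g₁ g₂ : B →ₐ[A] S) {ξ : B} {P : B[X]} {Q : A[X]}
    (hQ : (Polynomial.X - Polynomial.C ξ) * P = Q.map (algebraMap A B)) :
    g₁ ξ * P.eval₂ (g₂ : B →+* S) (g₁ ξ) = g₂ ξ * P.eval₂ (g₂ : B →+* S) (g₁ ξ) := by
  have ξ_root : Polynomial.aeval ξ Q = 0 := by
    rw [Polynomial.aeval_def, ← Polynomial.eval_map, ← hQ]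
    simp
  rw [← sub_eq_zero, ← sub_mul]
  calc (g₁ ξ - g₂ ξ) * P.eval₂ (g₂ : B →+* S) (g₁ ξ)
      = ((Polynomial.X - Polynomial.C ξ) * P).eval₂ (g₂ : B →+* S) (g₁ ξ) := by
        simp [Polynomial.eval₂_mul, Polynomial.eval₂_sub]
    _ = Polynomial.aeval (g₁ ξ) Q := by
        rw [hQ, Polynomial.eval₂_map, AlgHom.comp_algebraMap, Polynomial.aeval_def]
    _ = 0 := by rw [Polynomial.aeval_algHom_apply, ξ_root, map_zero]

theorem xK_zero (n : ℕ) (k : ℕ → ℕ) (j : ℕ) : xK 𝕜 n k j 0 = 1 := by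
  simp [xK, xp]

theorem yK_zero (n : ℕ) (k : ℕ → ℕ) (i j : ℕ) : yK 𝕜 n k i j 0 = 1 := by
  simp [yK, yp]

theorem yK_eq_zero_of_lt (n : ℕ) (k : ℕ → ℕ) (i j : ℕ) {α : ℕ} (hα : k j - k (j - 1) < α) :
    yK 𝕜 n k i j α = 0 := by
  simp [yK, yp, Nat.ne_zero_of_lt hα, hα.not_ge]

theorem IsPsi.X_sub_C_mul_chernRootPoly_yK {n i : ℕ} {k : ℕ → ℕ}
    {ψ : HK 𝕜 n (kup k i) →ₐ[𝕜] HKi 𝕜 n k i} (hψ : IsPsi 𝕜 n k i ψ) :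
    (Polynomial.X - Polynomial.C (xiK 𝕜 n k i)) *
        chernRootPoly (yK 𝕜 n k i i) (k i - k (i - 1)) =
      (chernRootPoly (xK 𝕜 n (kup k i) i) (k i - k (i - 1) + 1)).map ψ.toRingHom := by
  have h_zero : ψ (xK 𝕜 n (kup k i) i 0) = yK 𝕜 n k i i 0 := by rw [xK_zero, yK_zero, map_one]
  have h_succ (α : ℕ) : ψ (xK 𝕜 n (kup k i) i (α + 1)) =
      xiK 𝕜 n k i * yK 𝕜 n k i i α + yK 𝕜 n k i i (α + 1) :=
    hψ.2.2 (α + 1) (Nat.le_add_left 1 α)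
  rw [X_sub_C_mul_chernRootPoly (e := fun α ↦ ψ (xK 𝕜 n (kup k i) i α)) h_zero h_succ,
    yK_eq_zero_of_lt 𝕜 n k i i (Nat.lt_add_one _), mul_zero, map_zero, sub_zero,
    map_chernRootPoly]
  rfl

set_option synthInstance.maxHeartbeats 1000000 in
set_option maxHeartbeats 1000000 in
theorem stmt9 (n N i : ℕ) (k : ℕ → ℕ)
    (hn : 1 ≤ n) (hk0 : k 0 = 0) (hkN : k n = N) (hmono : ∀ j, j < n → k j ≤ k (j + 1))
    (hi1 : 1 ≤ i) (hin : i + 1 ≤ n) (hik : k i < k (i + 1))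
    (φ : HK 𝕜 n k →ₐ[𝕜] HKi 𝕜 n k i) (hφ : IsPhi 𝕜 n k i φ)
    (ψ : HK 𝕜 n (kup k i) →ₐ[𝕜] HKi 𝕜 n k i) (hψ : IsPsi 𝕜 n k i ψ) :
    letI : Algebra (HK 𝕜 n (kup k i)) (HKi 𝕜 n k i) := ψ.toRingHom.toAlgebra
    (xiK 𝕜 n k i ⊗ₜ[HK 𝕜 n (kup k i)] (1 : HKi 𝕜 n k i)) *
      (∑ f ∈ Finset.range (k i - k (i - 1) + 1),
        (-1 : TensorProduct (HK 𝕜 n (kup k i)) (HKi 𝕜 n k i) (HKi 𝕜 n k i)) ^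
            (k i - k (i - 1) - f) *
          ((xiK 𝕜 n k i ^ f) ⊗ₜ[HK 𝕜 n (kup k i)] φ (xK 𝕜 n k i (k i - k (i - 1) - f)))) =
    ((1 : HKi 𝕜 n k i) ⊗ₜ[HK 𝕜 n (kup k i)] xiK 𝕜 n k i) *
      (∑ f ∈ Finset.range (k i - k (i - 1) + 1),
        (-1 : TensorProduct (HK 𝕜 n (kup k i)) (HKi 𝕜 n k i) (HKi 𝕜 n k i)) ^
            (k i - k (i - 1) - f) *
          ((xiK 𝕜 n k i ^ f) ⊗ₜ[HK 𝕜 n (kup k i)] φ (xK 𝕜 n k i (k i - k (i - 1) - f)))) := by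
  let : Algebra (HK 𝕜 n (kup k i)) (HKi 𝕜 n k i) := ψ.toRingHom.toAlgebra
  have φ_xK (α : ℕ) : φ (xK 𝕜 n k i α) = yK 𝕜 n k i i α := hφ.1 i α (Nat.ne_add_one i)
  have ξ_swap := algHom_mul_eval₂_eq_algHom_mul_eval₂
    (S := HKi 𝕜 n k i ⊗[HK 𝕜 n (kup k i)] HKi 𝕜 n k i)
    Algebra.TensorProduct.includeLeft Algebra.TensorProduct.includeRight
    hψ.X_sub_C_mul_chernRootPoly_yK
  simpa only [φ_xK, eval₂_chernRootPoly, RingHom.coe_coe,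
    Algebra.TensorProduct.includeLeft_apply, Algebra.TensorProduct.includeRight_apply,
    Algebra.TensorProduct.tmul_pow, one_pow, Algebra.TensorProduct.tmul_mul_tmul, mul_one,
    one_mul] using ξ_swap

end Statements2
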